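/- Fix a finite index set ι with |ι| = n, partitioned into m nonempty blocks b₁,…,b_m, and let A be a positive semidefinite Hermitian complex matrix indexed by ι×ι, with block-diagonal pinching A'. Then for every integer k with 1 ≤ k ≤ n and every positive semidefinite Hermitian matrix B indexed by ι×ι, (d/dt)|_{t=0} σ_k(A + tB) ≤ 2^{(k−1)(m−1)} · (d/dt)|_{t=0} σ_k(A' + tB); equivalently, T_{k−1}(A) ≤ 2^{(k−1)(m−1)} T_{k−1}(A') in the Loewner order, where T_{k−1}(A) is the Hermitian matrix of partial derivatives of σ_k at A. (Lemma 6.3 (3), inequality (6.15).) -/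

import Mathlib

open Matrix ComplexOrder

/-- `esymm A k` is the `k`-th elementary symmetric function of the eigenvalues of the
Hermitian matrix `A`, computed as the (real part of the) sum of all `k × k` principal
minors of `A`. -/
noncomputable def esymm {ι : Type*} [Fintype ι] [DecidableEq ι]
    (A : Matrix ι ι ℂ) (k : ℕ) : ℝ :=
  (∑ S ∈ Finset.powersetCard k (Finset.univ : Finset ι),
    (A.submatrix (fun i : {x : ι // x ∈ S} => (i : ι))
      (fun i : {x : ι // x ∈ S} => (i : ι))).det).re

/-!
By Jacobi's formula, the gradient `T_k(A)` of `σ_{k+1}` at `A` is the sum of the adjugates of the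
principal submatrices of `A` of size `k + 1`. The adjugate is monotone for the Loewner order on
positive semidefinite matrices because its diagonal entries in any orthonormal basis are principal
minors, and the determinant is monotone. Hence `T_k` is monotone, and it is homogeneous of degree
`k`. Write `A'` for the pinching of `A` to `m` blocks. The `m × m` all-ones matrix `J` satisfies
`J ≤ m • 1`, which the Schur product theorem turns into `A ≤ m • A'`. Therefore
`T_k(A) ≤ m ^ k • T_k(A')`, and `m ≤ 2 ^ (m - 1)`.
-/

section LoewnerOrder

open scoped MatrixOrder

variable {κ 𝕜 : Type*} [Fintype κ] [DecidableEq κ] [RCLike 𝕜] {A B C : Matrix κ κ 𝕜}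

theorem one_le_det_of_one_le (hA : 1 ≤ A) : 1 ≤ A.det := by
  have hA_nonneg : 0 ≤ A := zero_le_one.trans hA
  have hA_herm : A.IsHermitian := (nonneg_iff_posSemidef.mp hA_nonneg).isHermitian
  have h_eigenvalues (i : κ) : 1 ≤ hA_herm.eigenvalues i :=
    (CFC.one_le_iff (R := ℝ) A hA_herm).mp hA _ (hA_herm.eigenvalues_mem_spectrum_real i)
  rw [hA_herm.det_eq_prod_eigenvalues]
  exact_mod_cast Finset.one_le_prod fun i _ => h_eigenvalues i

theorem det_le_det_of_le (hA : 0 ≤ A) (hAC : A ≤ C) : A.det ≤ C.det := by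
  have hA_psd : A.PosSemidef := nonneg_iff_posSemidef.mp hA
  rcases eq_or_ne A.det 0 with hdet | hdet
  · exact hdet ▸ (nonneg_iff_posSemidef.mp (hA.trans hAC)).det_nonneg
  obtain ⟨M, hM⟩ : ∃ M : Matrix κ κ 𝕜, C - A = Mᴴ * M :=
    CStarAlgebra.nonneg_iff_eq_star_mul_self.mp (sub_nonneg.mpr hAC)
  have h_factor : C = A * (1 + A⁻¹ * (Mᴴ * M)) := by
    rw [mul_add, mul_one, mul_nonsing_inv_cancel_left _ _ hdet.isUnit, ← hM, add_sub_cancel]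
  have h_one_le : 1 ≤ 1 + M * A⁻¹ * Mᴴ :=
    le_add_of_nonneg_right (hA_psd.inv.mul_mul_conjTranspose_same M).nonneg
  rw [h_factor, det_mul, ← mul_assoc, det_one_add_mul_comm, ← mul_assoc]
  exact le_mul_of_one_le_right hA_psd.det_nonneg (one_le_det_of_one_le h_one_le)

omit [DecidableEq κ] in
theorem mul_mul_conjTranspose_same_le {l : Type*} [Finite l] (hAC : A ≤ C) (X : Matrix l κ 𝕜) :
    X * A * Xᴴ ≤ X * C * Xᴴ := by
  have h := (le_iff.mp hAC).mul_mul_conjTranspose_same X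
  rwa [Matrix.mul_sub, Matrix.sub_mul] at h

omit [DecidableEq κ] in
theorem trace_mul_nonneg (hA : 0 ≤ A) (hB : 0 ≤ B) : 0 ≤ (A * B).trace := by
  classical
  obtain ⟨M, rfl⟩ : ∃ M : Matrix κ κ 𝕜, B = M * Mᴴ :=
    CStarAlgebra.nonneg_iff_eq_mul_star_self.mp hB
  rw [← mul_assoc, trace_mul_cycle]
  exact ((nonneg_iff_posSemidef.mp hA).conjTranspose_mul_mul_same M).trace_nonneg

omit [DecidableEq κ] in
theorem trace_mul_le_trace_mul (hAC : A ≤ C) (hB : 0 ≤ B) : (A * B).trace ≤ (C * B).trace := by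
  have h := trace_mul_nonneg (sub_nonneg.mpr hAC) hB
  rwa [sub_mul, trace_sub, sub_nonneg] at h

end LoewnerOrder

section Adjugate

open scoped MatrixOrder

variable {κ R 𝕜 : Type*} [Fintype κ] [DecidableEq κ] [CommRing R] [RCLike 𝕜]

theorem adjugate_apply_self_eq_det_submatrix (M : Matrix κ κ R) (i : κ) :
    M.adjugate i i = (M.submatrix ((↑) : ({i}ᶜ : Finset κ) → κ) (↑)).det := by
  have h_row : (1 : Matrix κ κ R).row i = Pi.single i 1 := funext fun _ => one_eq_pi_single
  rw [adjugate_apply, ← det_piecewise_one_eq_submatrix_det, Finset.piecewise_compl,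
    Finset.piecewise_singleton, h_row]
  rfl

theorem adjugate_mul_mul_of_mul_eq_one {P Q : Matrix κ κ R} (hPQ : P * Q = 1)
    (M : Matrix κ κ R) : (P * M * Q).adjugate = P * M.adjugate * Q := by
  have adjugate_eq {X Y : Matrix κ κ R} (hXY : X * Y = 1) : X.adjugate = X.det • Y := by
    rw [← mul_one X.adjugate, ← hXY, ← mul_assoc, adjugate_mul, Matrix.smul_mul, one_mul]
  have hdet : Q.det * P.det = 1 := by rw [mul_comm, ← det_mul, hPQ, det_one]
  rw [adjugate_mul_distrib, adjugate_mul_distrib, adjugate_eq hPQ,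
    adjugate_eq (mul_eq_one_comm.mp hPQ)]
  simp only [Matrix.mul_smul, Matrix.smul_mul, smul_smul, mul_comm P.det, hdet, one_smul, mul_assoc]

theorem adjugate_apply_self_le {A C : Matrix κ κ 𝕜} (hA : 0 ≤ A) (hAC : A ≤ C) (i : κ) :
    A.adjugate i i ≤ C.adjugate i i := by
  rw [adjugate_apply_self_eq_det_submatrix, adjugate_apply_self_eq_det_submatrix]
  exact det_le_det_of_le ((nonneg_iff_posSemidef.mp hA).submatrix _).nonneg
    ((le_iff.mp hAC).submatrix _)

theorem adjugate_le_adjugate {A C : Matrix κ κ 𝕜} (hA : 0 ≤ A) (hAC : A ≤ C) :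
    A.adjugate ≤ C.adjugate := by
  have hA_psd : A.PosSemidef := nonneg_iff_posSemidef.mp hA
  have hC_psd : C.PosSemidef := nonneg_iff_posSemidef.mp (hA.trans hAC)
  have h_herm : (C.adjugate - A.adjugate).IsHermitian :=
    hC_psd.isHermitian.adjugate.sub hA_psd.isHermitian.adjugate
  rw [le_iff, h_herm.posSemidef_iff_eigenvalues_nonneg]
  intro i
  let U : Matrix κ κ 𝕜 := h_herm.eigenvectorUnitary
  have hU : Uᴴ * U = 1 := Unitary.coe_star_mul_self h_herm.eigenvectorUnitary
  have h_eigenvalue : (h_herm.eigenvalues i : 𝕜) =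
      (Uᴴ * C * U).adjugate i i - (Uᴴ * A * U).adjugate i i := by
    have h := congr_fun₂ h_herm.conjStarAlgAut_star_eigenvectorUnitary i i
    rw [Unitary.conjStarAlgAut_star_apply, diagonal_apply_eq] at h
    rw [adjugate_mul_mul_of_mul_eq_one hU, adjugate_mul_mul_of_mul_eq_one hU, ← Matrix.sub_apply,
      ← Matrix.sub_mul, ← Matrix.mul_sub]
    exact h.symm
  have h_nonneg : (0 : 𝕜) ≤ h_herm.eigenvalues i := by
    rw [h_eigenvalue, sub_nonneg]
    exact adjugate_apply_self_le (hA_psd.conjTranspose_mul_mul_same U).nonneg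
      (by simpa using mul_mul_conjTranspose_same_le hAC Uᴴ) i
  exact_mod_cast h_nonneg

theorem adjugate_nonneg {A : Matrix κ κ 𝕜} (hA : 0 ≤ A) : 0 ≤ A.adjugate := by
  refine le_trans ?_ (adjugate_le_adjugate le_rfl hA)
  cases subsingleton_or_nontrivial κ
  · rw [adjugate_subsingleton]
    exact zero_le_one
  · rw [adjugate_zero]

end Adjugate

section Jacobi

variable {κ : Type*} [Fintype κ] [DecidableEq κ]

theorem trace_adjugate_mul_eq_sum_det_updateRow {R : Type*} [CommRing R] (A B : Matrix κ κ R) :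
    (A.adjugate * B).trace = ∑ i, (A.updateRow i (B i)).det := by
  rw [trace_mul_comm]
  refine Finset.sum_congr rfl fun i _ => ?_
  rw [← cramer_transpose_apply, cramer_eq_adjugate_mulVec, ← adjugate_transpose]
  simp [mul_apply, mulVec, dotProduct, mul_comm]

theorem hasDerivAt_det {𝕜 R : Type*} [NontriviallyNormedField 𝕜] [NormedCommRing R]
    [NormedAlgebra 𝕜 R] {A : 𝕜 → Matrix κ κ R} {A' : Matrix κ κ R} {t : 𝕜}
    (hA : ∀ i j, HasDerivAt (fun s => A s i j) (A' i j) t) :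
    HasDerivAt (fun s => (A s).det) ((A t).adjugate * A').trace t := by
  let detRows : ContinuousMultilinearMap R (fun _ : κ => κ → R) R :=
    { (detRowAlternating : (κ → R) [⋀^κ]→ₗ[R] R).toMultilinearMap with
      cont := Continuous.matrix_det continuous_id }
  have h_rows : HasDerivAt (fun s => (fun i => A s i : κ → κ → R)) (fun i => A' i) t :=
    hasDerivAt_pi.mpr fun i => hasDerivAt_pi.mpr fun j => hA i j
  have h_det := ((detRows.restrictScalars 𝕜).hasFDerivAt fun i => A t i).comp_hasDerivAt t h_rows
  rw [ContinuousMultilinearMap.linearDeriv_apply] at h_det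
  exact h_det.congr_deriv (trace_adjugate_mul_eq_sum_det_updateRow (A t) A').symm

end Jacobi

section Pinching

open scoped MatrixOrder

variable {ι β R 𝕜 : Type*} [DecidableEq β] [CommRing R] [RCLike 𝕜]

/-- The block-diagonal pinching of `A` for the partition of the index set into the fibres of
`blk`: the entries of `A` outside the diagonal blocks are replaced by zero. -/
def pinching (blk : ι → β) (A : Matrix ι ι R) : Matrix ι ι R :=
  of fun i j => if blk i = blk j then A i j else 0

theorem pinching_eq_hadamard (blk : ι → β) (A : Matrix ι ι R) :
    pinching blk A = A ⊙ (1 : Matrix β β R).submatrix blk blk := by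
  ext i j
  simp [pinching, one_apply]

theorem pinching_nonneg (blk : ι → β) {A : Matrix ι ι 𝕜} (hA : 0 ≤ A) : 0 ≤ pinching blk A := by
  rw [pinching_eq_hadamard]
  exact ((nonneg_iff_posSemidef.mp hA).hadamard (PosSemidef.one.submatrix blk)).nonneg

variable [Fintype β]

theorem of_one_le_card_smul_one :
    (of fun _ _ => 1 : Matrix β β 𝕜) ≤ (Fintype.card β : 𝕜) • (1 : Matrix β β 𝕜) := by
  cases isEmpty_or_nonempty β
  · exact (Subsingleton.elim _ _).le
  rw [le_iff]
  set J : Matrix β β 𝕜 := of fun _ _ => 1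
  set P : Matrix β β 𝕜 := (Fintype.card β : 𝕜) • 1 - J
  have hJ_herm : Jᴴ = J := by
    ext
    simp [J]
  have hJ_mul : J * J = (Fintype.card β : 𝕜) • J := by
    ext
    simp [J, mul_apply]
  have hP : P = (Fintype.card β : 𝕜)⁻¹ • (P * Pᴴ) := by
    rw [eq_inv_smul_iff₀ (Nat.cast_ne_zero.mpr Fintype.card_ne_zero)]
    simp [P, mul_sub, sub_mul, hJ_herm, hJ_mul]
  rw [hP]
  exact (posSemidef_self_mul_conjTranspose P).smul (by positivity)

theorem le_card_smul_pinching (blk : ι → β) {A : Matrix ι ι 𝕜} (hA : 0 ≤ A) :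
    A ≤ (Fintype.card β : 𝕜) • pinching blk A := by
  have h := (nonneg_iff_posSemidef.mp hA).hadamard
    ((le_iff.mp (of_one_le_card_smul_one (𝕜 := 𝕜) (β := β))).submatrix blk)
  rw [le_iff]
  convert h using 1
  ext i j
  simp [pinching_eq_hadamard, mul_sub, mul_left_comm]

end Pinching

section NewtonTransform

open scoped MatrixOrder

variable {ι R 𝕜 : Type*} [Fintype ι] [DecidableEq ι] [CommRing R] [RCLike 𝕜]

/-- The matrix of the coordinate inclusion `R^S → R^ι`. It is used to extend a matrix indexed by
`S` to one indexed by `ι`. -/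
def coordInclusion (R : Type*) [CommRing R] (S : Finset ι) : Matrix ι S R :=
  (1 : Matrix ι ι R).submatrix id (↑)

theorem transpose_coordInclusion_mul_mul (S : Finset ι) (A : Matrix ι ι R) :
    (coordInclusion R S)ᵀ * A * coordInclusion R S = A.submatrix (↑) (↑) := by
  ext i j
  simp [coordInclusion, mul_apply, one_apply]

omit [Fintype ι] in
theorem conjTranspose_coordInclusion (S : Finset ι) :
    (coordInclusion 𝕜 S)ᴴ = (coordInclusion 𝕜 S)ᵀ := by
  simp [coordInclusion]

/-- The `k`-th Newton transformation `T_k(A)`, the gradient of `σ_{k+1}` at `A` in the sense that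
the derivative in direction `B` is the trace of `T_k(A) * B` (see `hasDerivAt_esymm`). By Jacobi's
formula it is the sum of the adjugates of the principal submatrices of `A` of size `k + 1`, each
extended by zero to the whole index set. -/
def newtonTransform (k : ℕ) (A : Matrix ι ι R) : Matrix ι ι R :=
  ∑ S ∈ Finset.powersetCard (k + 1) (Finset.univ : Finset ι),
    coordInclusion R S * (A.submatrix (↑) (↑) : Matrix S S R).adjugate * (coordInclusion R S)ᵀ

theorem newtonTransform_smul (k : ℕ) (c : R) (A : Matrix ι ι R) :
    newtonTransform k (c • A) = c ^ k • newtonTransform k A := by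
  rw [newtonTransform, newtonTransform, Finset.smul_sum]
  refine Finset.sum_congr rfl fun S hS => ?_
  rw [submatrix_smul, Pi.smul_apply, Pi.smul_apply, adjugate_smul, Fintype.card_coe,
    (Finset.mem_powersetCard.mp hS).2, Nat.add_sub_cancel, Matrix.mul_smul, Matrix.smul_mul]

theorem newtonTransform_le_newtonTransform (k : ℕ) {A C : Matrix ι ι 𝕜} (hA : 0 ≤ A)
    (hAC : A ≤ C) : newtonTransform k A ≤ newtonTransform k C := by
  refine Finset.sum_le_sum fun S _ => ?_
  rw [← conjTranspose_coordInclusion]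
  refine mul_mul_conjTranspose_same_le (adjugate_le_adjugate ?_ ?_) _
  · exact ((nonneg_iff_posSemidef.mp hA).submatrix _).nonneg
  · exact (le_iff.mp hAC).submatrix _

theorem newtonTransform_nonneg (k : ℕ) {A : Matrix ι ι 𝕜} (hA : 0 ≤ A) :
    0 ≤ newtonTransform k A := by
  refine Finset.sum_nonneg fun S _ => ?_
  rw [← conjTranspose_coordInclusion]
  have h_adj := adjugate_nonneg ((nonneg_iff_posSemidef.mp hA).submatrix ((↑) : S → ι)).nonneg
  exact ((nonneg_iff_posSemidef.mp h_adj).mul_mul_conjTranspose_same _).nonneg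

theorem newtonTransform_le_smul_newtonTransform_pinching {β : Type*} [Fintype β] [DecidableEq β]
    (k : ℕ) (blk : ι → β) {A : Matrix ι ι 𝕜} (hA : 0 ≤ A) :
    newtonTransform k A ≤ (Fintype.card β : 𝕜) ^ k • newtonTransform k (pinching blk A) := by
  rw [← newtonTransform_smul]
  exact newtonTransform_le_newtonTransform k hA (le_card_smul_pinching blk hA)

theorem trace_newtonTransform_mul (k : ℕ) (A B : Matrix ι ι R) :
    (newtonTransform k A * B).trace = ∑ S ∈ Finset.powersetCard (k + 1) (Finset.univ : Finset ι),
      ((A.submatrix ((↑) : S → ι) (↑)).adjugate * B.submatrix ((↑) : S → ι) (↑)).trace := by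
  rw [newtonTransform, Finset.sum_mul, trace_sum]
  refine Finset.sum_congr rfl fun S _ => ?_
  rw [← transpose_coordInclusion_mul_mul S B, Matrix.mul_assoc, Matrix.mul_assoc, trace_mul_comm,
    Matrix.mul_assoc, Matrix.mul_assoc]

theorem hasDerivAt_esymm (A B : Matrix ι ι ℂ) (k : ℕ) :
    HasDerivAt (fun t : ℝ => esymm (A + (t : ℂ) • B) (k + 1)) (newtonTransform k A * B).trace.re
      0 := by
  have h_entry (i j : ι) : HasDerivAt (fun t : ℝ => (A + (t : ℂ) • B) i j) (B i j) 0 := by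
    simpa using ((Complex.ofRealCLM.hasDerivAt (x := 0)).mul_const (B i j)).const_add (A i j)
  have h_minor (S : Finset ι) :
      HasDerivAt (fun t : ℝ => ((A + (t : ℂ) • B).submatrix (↑) (↑) : Matrix S S ℂ).det)
        ((A.submatrix ((↑) : S → ι) (↑)).adjugate * B.submatrix ((↑) : S → ι) (↑)).trace 0 := by
    simpa using hasDerivAt_det (A := fun t : ℝ => (A + (t : ℂ) • B).submatrix ((↑) : S → ι) (↑))
      (A' := B.submatrix (↑) (↑)) fun i j => h_entry i j
  rw [trace_newtonTransform_mul]
  exact Complex.reCLM.hasFDerivAt.comp_hasDerivAt 0 (HasDerivAt.fun_sum fun S _ => h_minor S)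

theorem deriv_esymm_nonneg {A B : Matrix ι ι ℂ} (hA : 0 ≤ A) (hB : 0 ≤ B) (k : ℕ) :
    0 ≤ deriv (fun t : ℝ => esymm (A + (t : ℂ) • B) (k + 1)) 0 := by
  rw [(hasDerivAt_esymm A B k).deriv]
  exact (Complex.nonneg_iff.mp (trace_mul_nonneg (newtonTransform_nonneg k hA) hB)).1

end NewtonTransform

theorem stmt11_general {ι β : Type*} [Fintype ι] [DecidableEq ι] [Fintype β] [DecidableEq β]
    (blk : ι → β) {A B : Matrix ι ι ℂ} (hA : A.PosSemidef) (hB : B.PosSemidef) (k : ℕ) :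
    deriv (fun t : ℝ => esymm (A + (t : ℂ) • B) (k + 1)) 0
      ≤ (Fintype.card β : ℝ) ^ k *
        deriv (fun t : ℝ => esymm (pinching blk A + (t : ℂ) • B) (k + 1)) 0 := by
  have h := (Complex.le_def.mp <| trace_mul_le_trace_mul
    (newtonTransform_le_smul_newtonTransform_pinching k blk hA.nonneg) hB.nonneg).1
  rw [(hasDerivAt_esymm A B k).deriv, (hasDerivAt_esymm (pinching blk A) B k).deriv,
    ← Complex.re_ofReal_mul]
  simpa [Matrix.smul_mul, trace_smul] using h

theorem natCast_pow_le_two_pow_mul_sub_one (m j : ℕ) : (m : ℝ) ^ j ≤ 2 ^ (j * (m - 1)) := by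
  have hm : m ≤ 2 ^ (m - 1) := Nat.le_of_pred_lt (m - 1).lt_two_pow_self
  rw [pow_mul']
  exact_mod_cast Nat.pow_le_pow_left hm j

/-- Lemma 6.3 (3), inequality (6.15): for a positive semidefinite Hermitian matrix `A`
indexed by `ι` (of cardinality `n`) partitioned into `m` nonempty blocks, with
block-diagonal pinching `A'`, for every `1 ≤ k ≤ n` and every positive semidefinite `B`,
`(d/dt)|₀ σ_k(A + tB) ≤ 2^((k-1)(m-1)) · (d/dt)|₀ σ_k(A' + tB)`, i.e.
`T_{k-1}(A) ≤ 2^((k-1)(m-1)) T_{k-1}(A')` in the Loewner order. -/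
theorem stmt11 (ι : Type) [Fintype ι] [DecidableEq ι] (n m : ℕ)
    (hcard : Fintype.card ι = n)
    (blk : ι → Fin m) (hblk : Function.Surjective blk)
    (A : Matrix ι ι ℂ) (hA : A.PosSemidef)
    (k : ℕ) (hk1 : 1 ≤ k) (hk : k ≤ n)
    (B : Matrix ι ι ℂ) (hB : B.PosSemidef) :
    deriv (fun t : ℝ => esymm (A + (t : ℂ) • B) k) 0
      ≤ (2 : ℝ) ^ ((k - 1) * (m - 1)) *
        deriv (fun t : ℝ =>
          esymm ((Matrix.of fun i j => if blk i = blk j then A i j else 0)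
            + (t : ℂ) • B) k) 0 := by
  obtain ⟨j, rfl⟩ := Nat.exists_eq_add_of_le' hk1
  exact (stmt11_general blk hA hB j).trans <| mul_le_mul_of_nonneg_right
    (by simpa only [Fintype.card_fin, Nat.add_sub_cancel] using
      natCast_pow_le_two_pow_mul_sub_one m j)
    (deriv_esymm_nonneg (pinching_nonneg blk hA.nonneg) hB.nonneg j)
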